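/- arXiv:1611.06346 — 2 statements merged into one kernel-verified Lean document; each statement's English description precedes it below -/
import Mathlib

section
/- Let f = (f₁,…,fₙ) be a polynomial vector field, fⱼ(y) = ∑_{i} c_{j,i} y₁^{i₁}⋯yₙ^{iₙ} (finite sums over multi-indices i = (i₁,…,iₙ)), and write w(i) = ∑_{l=1}^{n} αₗ iₗ for the weighted degree. Assume that for every j and every multi-index i with c_{j,i} ≠ 0 one has w(i) ≤ k + αⱼ, and moreover that c_{j,i} = 0 whenever w(i) ∈ {k + αⱼ − γ : γ = 1,…,2c−1}. Then the desingularized vector field g extends to a continuously differentiable (C¹) map on the closed disk D̄ = {x ∈ ℝⁿ : p(x) ≤ 1}. -/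
/-!
On `D` put `q(x) = 1 - ∑_{i∈I} aᵢ xᵢ^{2βᵢ} > 0`, so that `κ̂ = q^{-1/(2c)}`. Substituting the
weighted rescaling into a monomial `y^d` of `fⱼ` produces the factor `κ̂^{w(d)}`, hence
`f̃ⱼ(x) = ∑_d c_{j,d} q(x)^{(k+αⱼ-w(d))/(2c)} x^d` (`fTil_eq_fExt`). By the degree and band
conditions each exponent `(k+αⱼ-w(d))/(2c)` is either `0` or at least `1`, and `t ↦ t^e` is `C¹` on
all of `ℝ` for such `e` (`contDiff_rpow_of_zero_or_one_le`). The right-hand side is therefore `C¹`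
on `ℝⁿ`, and inserting it in place of `f̃` in the formula for `g` gives an extension which is `C¹`
even on the whole space, in particular on `D̄`.
-/

open Finset

/-- The quasi-Poincaré functional `p(y) = (∑_{i∈I} aᵢ yᵢ^{2βᵢ})^{1/(2c)}`,
where `I = {i : 0 < αᵢ}`. -/
noncomputable def pF {n : ℕ} (α β : Fin n → ℕ) (a : Fin n → ℝ) (c : ℕ)
    (y : Fin n → ℝ) : ℝ :=
  (∑ i ∈ univ.filter (fun i => 0 < α i), a i * y i ^ (2 * β i)) ^ ((1 : ℝ) / (2 * (c : ℝ)))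

/-- `κ̂(x) = (1 − ∑_{i∈I} aᵢ xᵢ^{2βᵢ})^{−1/(2c)}`, i.e. `κ(T⁻¹(x))` for `x ∈ D`. -/
noncomputable def kHat {n : ℕ} (α β : Fin n → ℕ) (a : Fin n → ℝ) (c : ℕ)
    (x : Fin n → ℝ) : ℝ :=
  (1 - ∑ i ∈ univ.filter (fun i => 0 < α i), a i * x i ^ (2 * β i)) ^ (-(1 : ℝ) / (2 * (c : ℝ)))

/-- `f̃ⱼ(x) = κ̂(x)^{−(k+αⱼ)} fⱼ(κ̂(x)^{α₁}x₁,…,κ̂(x)^{αₙ}xₙ)`. -/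
noncomputable def fTil {n : ℕ} (α β : Fin n → ℕ) (a : Fin n → ℝ) (c : ℕ) (k : ℤ)
    (f : (Fin n → ℝ) → Fin n → ℝ) (x : Fin n → ℝ) (j : Fin n) : ℝ :=
  (kHat α β a c x) ^ (-(k + (α j : ℤ))) *
    f (fun i => (kHat α β a c x) ^ (α i) * x i) j

/-- `S(x) = ∑_{j∈I} βⱼ aⱼ xⱼ^{2βⱼ−1} f̃ⱼ(x)`. -/
noncomputable def SF {n : ℕ} (α β : Fin n → ℕ) (a : Fin n → ℝ) (c : ℕ) (k : ℤ)
    (f : (Fin n → ℝ) → Fin n → ℝ) (x : Fin n → ℝ) : ℝ :=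
  ∑ j ∈ univ.filter (fun i => 0 < α i),
    (β j : ℝ) * a j * x j ^ (2 * β j - 1) * fTil α β a c k f x j

/-- The desingularized vector field `gᵢ(x) = f̃ᵢ(x) − (αᵢ xᵢ / c) S(x)`. -/
noncomputable def gDesing {n : ℕ} (α β : Fin n → ℕ) (a : Fin n → ℝ) (c : ℕ) (k : ℤ)
    (f : (Fin n → ℝ) → Fin n → ℝ) (x : Fin n → ℝ) : Fin n → ℝ :=
  fun i => fTil α β a c k f x i - ((α i : ℝ) * x i / (c : ℝ)) * SF α β a c k f x


/-- `q(x) = 1 − ∑_{i∈I} aᵢ xᵢ^{2βᵢ}`, the base of the power defining `κ̂`. -/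
noncomputable def qF {n : ℕ} (α β : Fin n → ℕ) (a : Fin n → ℝ) (x : Fin n → ℝ) : ℝ :=
  1 - ∑ i ∈ univ.filter (fun i => 0 < α i), a i * x i ^ (2 * β i)

/-- The extension `∑_d c_{j,d} q(x)^{(k+αⱼ−w(d))/(2c)} x^d` of `f̃ⱼ` to `ℝⁿ`. The subtraction of
natural numbers is a true one under the degree condition; outside `D̄` the power of the negative
number `q(x)` takes the values of `Real.rpow`, which do not matter. -/
noncomputable def fExt {n : ℕ} (α β : Fin n → ℕ) (a : Fin n → ℝ) (c k : ℕ)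
    (P : Fin n → MvPolynomial (Fin n) ℝ) (x : Fin n → ℝ) (j : Fin n) : ℝ :=
  ∑ d ∈ (P j).support, MvPolynomial.coeff d (P j) *
    (qF α β a x ^ (((k + α j - ∑ l, α l * d l : ℕ) : ℝ) / (2 * (c : ℝ))) * ∏ i, x i ^ d i)

lemma contDiff_qF {n : ℕ} (α β : Fin n → ℕ) (a : Fin n → ℝ) : ContDiff ℝ 1 (qF α β a) := by
  unfold qF
  fun_prop

/-- Positivity of `q` on `D`: if the sum defining `q` were at least `1`, so would be its
`2c`-th root `p(x)`. -/
lemma qF_pos {n : ℕ} {α β : Fin n → ℕ} {a : Fin n → ℝ} {c : ℕ} (hc : 0 < c)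
    {x : Fin n → ℝ} (hx : pF α β a c x < 1) : 0 < qF α β a x := by
  have hc' : (0 : ℝ) < c := by exact_mod_cast hc
  by_contra! h
  have h1 : 1 ≤ ∑ i ∈ univ.filter (fun i => 0 < α i), a i * x i ^ (2 * β i) := by
    unfold qF at h
    linarith
  exact absurd hx (not_lt.mpr (Real.one_le_rpow h1 (by positivity)))

lemma contDiff_rpow_of_zero_or_one_le {e : ℝ} (he : e = 0 ∨ 1 ≤ e) :
    ContDiff ℝ 1 (fun t : ℝ => t ^ e) := by
  rcases he with rfl | he
  · simpa using contDiff_const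
  · exact_mod_cast Real.contDiff_rpow_const_of_le (n := 1) (by simpa using he)

lemma contDiff_fExt {n : ℕ} (α β : Fin n → ℕ) (a : Fin n → ℝ) (c k : ℕ) (hc : 0 < c)
    (P : Fin n → MvPolynomial (Fin n) ℝ) (j : Fin n)
    (hband : ∀ d : Fin n →₀ ℕ, MvPolynomial.coeff d (P j) ≠ 0 →
      ∀ γ : ℕ, 1 ≤ γ → γ ≤ 2 * c - 1 → (∑ l, α l * d l) + γ ≠ k + α j) :
    ContDiff ℝ 1 (fun x => fExt α β a c k P x j) := by
  have hc' : (0 : ℝ) < c := by exact_mod_cast hc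
  unfold fExt
  refine ContDiff.sum fun d hd => contDiff_const.mul (ContDiff.mul ?_ ?_)
  · have hd0 : k + α j - ∑ l, α l * d l = 0 ∨ 2 * c ≤ k + α j - ∑ l, α l * d l := by
      by_contra! hcon
      exact hband d (MvPolynomial.mem_support_iff.mp hd) (k + α j - ∑ l, α l * d l)
        (by omega) (by omega) (by omega)
    refine (contDiff_rpow_of_zero_or_one_le ?_).comp (contDiff_qF α β a)
    rcases hd0 with h | h
    · left
      rw [h]
      simp
    · right
      rw [le_div_iff₀ (by positivity), one_mul]
      exact_mod_cast h
  · fun_prop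

/-- On `D` the weighted homogeneity of each monomial collects all powers of `κ̂` into a single
power of `q`. -/
lemma fTil_eq_fExt {n : ℕ} (α β : Fin n → ℕ) (a : Fin n → ℝ) (c k : ℕ)
    (P : Fin n → MvPolynomial (Fin n) ℝ) (j : Fin n)
    (hdeg : ∀ d : Fin n →₀ ℕ, MvPolynomial.coeff d (P j) ≠ 0 → (∑ l, α l * d l) ≤ k + α j)
    {x : Fin n → ℝ} (hq : 0 < qF α β a x) :
    fTil α β a c (k : ℤ) (fun y j => MvPolynomial.eval y (P j)) x j = fExt α β a c k P x j := by
  have hκ : kHat α β a c x = qF α β a x ^ (-(1 : ℝ) / (2 * (c : ℝ))) := rfl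
  have hκ0 : 0 < kHat α β a c x := hκ ▸ Real.rpow_pos_of_pos hq _
  unfold fTil fExt
  beta_reduce
  rw [MvPolynomial.eval_eq', Finset.mul_sum]
  refine Finset.sum_congr rfl fun d hd => ?_
  have hw := hdeg d (MvPolynomial.mem_support_iff.mp hd)
  have hprod : ∏ i, (kHat α β a c x ^ α i * x i) ^ d i
      = kHat α β a c x ^ (∑ l, α l * d l) * ∏ i, x i ^ d i := by
    simp only [mul_pow, ← pow_mul, Finset.prod_mul_distrib, Finset.prod_pow_eq_pow_sum]
  have hpow : kHat α β a c x ^ (-((k : ℤ) + (α j : ℤ))) * kHat α β a c x ^ (∑ l, α l * d l)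
      = qF α β a x ^ (((k + α j - ∑ l, α l * d l : ℕ) : ℝ) / (2 * (c : ℝ))) := by
    rw [← zpow_natCast (kHat α β a c x), ← zpow_add₀ hκ0.ne', ← Real.rpow_intCast, hκ,
      ← Real.rpow_mul hq.le, Nat.cast_sub hw]
    congr 1
    push_cast
    ring
  rw [hprod, ← hpow]
  ring

/-- For a polynomial vector field `fⱼ = eval (P j)` whose monomials have
weighted degrees `w(d) = ∑ l αₗ dₗ` satisfying `w(d) ≤ k + αⱼ` and avoiding the
band `{k + αⱼ − γ : γ = 1,…,2c−1}`, the desingularized vector field `g`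
extends to a `C¹` map on the closed disk `D̄ = {p(x) ≤ 1}`. -/
theorem desing_C1_extension_of_polynomial
    {n : ℕ} (hn : 1 ≤ n) (α β : Fin n → ℕ) (a : Fin n → ℝ) (c : ℕ)
    (hα : ∃ i, 0 < α i) (hc : 0 < c)
    (hαβ : ∀ i, 0 < α i → α i * β i = c)
    (hβ0 : ∀ i, α i = 0 → β i = 0)
    (ha : ∀ i, 1 ≤ a i)
    (k : ℕ) (hk : 1 ≤ k)
    (P : Fin n → MvPolynomial (Fin n) ℝ)
    (hdeg : ∀ (j : Fin n) (d : Fin n →₀ ℕ), MvPolynomial.coeff d (P j) ≠ 0 →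
      (∑ l, α l * d l) ≤ k + α j)
    (hband : ∀ (j : Fin n) (d : Fin n →₀ ℕ), MvPolynomial.coeff d (P j) ≠ 0 →
      ∀ γ : ℕ, 1 ≤ γ → γ ≤ 2 * c - 1 → (∑ l, α l * d l) + γ ≠ k + α j) :
    ∃ G : (Fin n → ℝ) → Fin n → ℝ,
      ContDiffOn ℝ 1 G {x : Fin n → ℝ | pF α β a c x ≤ 1} ∧
      ∀ x : Fin n → ℝ, pF α β a c x < 1 →
        G x = gDesing α β a c (k : ℤ)
          (fun y j => MvPolynomial.eval y (P j)) x := by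
  refine ⟨fun x i => fExt α β a c k P x i - ((α i : ℝ) * x i / (c : ℝ)) *
    ∑ j ∈ univ.filter (fun i => 0 < α i),
      (β j : ℝ) * a j * x j ^ (2 * β j - 1) * fExt α β a c k P x j, ?_, ?_⟩
  · have hF := fun j => contDiff_fExt α β a c k hc P j (hband j)
    refine ContDiff.contDiffOn (contDiff_pi.mpr fun i => (hF i).sub (ContDiff.mul ?_ ?_))
    · fun_prop
    · exact ContDiff.sum fun j _ => ContDiff.mul (by fun_prop) (hF j)
  · intro x hx
    have hF := fun j => fTil_eq_fExt α β a c k P j (hdeg j) (qF_pos hc hx)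
    funext i
    simp only [gDesing, SF, hF]
end

section
/- Let f : ℝⁿ → ℝⁿ be continuous and asymptotically quasi-homogeneous of type α and order k+1 at infinity, and suppose the desingularized vector field g admits a locally Lipschitz continuous extension G to the closed disk D̄ = {p(x) ≤ 1}. Let t₀ < b ≤ +∞ and let y : (t₀, b) → ℝⁿ be differentiable with y'(t) = f(y(t)) for all t. If p(y(t)) → ∞ and T(y(t)) → x* as t → b⁻ (so y tends to infinity in the direction x* ∈ E), then x* is an equilibrium of the desingularized vector field at infinity: G(x*) = 0. -/
/-!
In the compactified coordinates `x = T(y)` a solution of `y' = f(y)` satisfies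
`xᵢ' = κ^k gᵢ(x)` (`hasDerivAt_TqP`) and `(log κ)' = κ^k S(x) / c` (`hasDerivAt_log_kF`), where
`κ = κ(y) → ∞`. As `x → x*` and `x*` lies on the horizon, `S(x)` stays bounded: quasi-homogeneous
rescaling moves `x` to the unit cylinder by a factor bounded above and below (`exists_scaling`),
and there the asymptotic condition bounds `f̃` (`bounded_rescaled`).

Suppose `σ = Gᵢ(x*) ≠ 0`. By continuity of `G` on the closed disk, `(σ xᵢ)' ≥ κ^k σ² / 2` near the
end of the trajectory, so for small `η > 0` the function `σ xᵢ - η log κ` is eventually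
nondecreasing. This is impossible, since `xᵢ` converges and `log κ → ∞`. Comparing with `log κ`
instead of with time treats finite-time blow-up and `b = +∞` at once.
-/

open Finset Filter

/-- The quasi-Poincaré functional `κ(y) = (1 + p(y)^{2c})^{1/(2c)}`. -/
noncomputable def kF {n : ℕ} (α β : Fin n → ℕ) (a : Fin n → ℝ) (c : ℕ)
    (y : Fin n → ℝ) : ℝ :=
  (1 + pF α β a c y ^ (2 * c)) ^ ((1 : ℝ) / (2 * (c : ℝ)))

/-- The quasi-Poincaré compactification `T(y)ᵢ = yᵢ / κ(y)^{αᵢ}`. -/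
noncomputable def TqP {n : ℕ} (α β : Fin n → ℕ) (a : Fin n → ℝ) (c : ℕ)
    (y : Fin n → ℝ) : Fin n → ℝ :=
  fun i => y i / (kF α β a c y) ^ (α i)

/-- `fak` is quasi-homogeneous of type `α` and order `k+1`. -/
def IsQH {n : ℕ} (α : Fin n → ℕ) (k : ℕ)
    (fak : (Fin n → ℝ) → Fin n → ℝ) : Prop :=
  ∀ (x : Fin n → ℝ) (R : ℝ) (j : Fin n),
    fak (fun i => R ^ (α i) * x i) j = R ^ (k + α j) * fak x j

/-- `f` is asymptotically quasi-homogeneous of type `α` and order `k+1` at infinity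
with quasi-homogeneous part `fak`. -/
def IsAQH {n : ℕ} (α : Fin n → ℕ) (k : ℕ)
    (f fak : (Fin n → ℝ) → Fin n → ℝ) : Prop :=
  IsQH α k fak ∧
  ∀ K : Set (Fin n → ℝ), IsCompact K → ∀ ε : ℝ, 0 < ε → ∃ R₀ : ℝ,
    ∀ R : ℝ, R₀ ≤ R → ∀ x ∈ K,
      (∑ i ∈ univ.filter (fun i => 0 < α i), x i ^ 2) = 1 →
      ∀ j : Fin n,
        |R ^ (-((k : ℤ) + (α j : ℤ))) *
          (f (fun i => R ^ (α i) * x i) j - R ^ (k + α j) * fak x j)| < ε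

/-! ### The compactification and the desingularized equation -/

/-- The sum `∑_{i∈I} aᵢ yᵢ^{2βᵢ}`, that is `p(y)^{2c}`. -/
noncomputable def pSum {n : ℕ} (α β : Fin n → ℕ) (a : Fin n → ℝ) (y : Fin n → ℝ) : ℝ :=
  ∑ i ∈ univ.filter (fun i => 0 < α i), a i * y i ^ (2 * β i)

section compactification

variable {n : ℕ} {α β : Fin n → ℕ} {a : Fin n → ℝ} {c : ℕ}

lemma pSum_nonneg (ha : ∀ i, 1 ≤ a i) (y : Fin n → ℝ) : 0 ≤ pSum α β a y := by
  refine Finset.sum_nonneg fun i _ => mul_nonneg (by linarith [ha i]) ?_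
  rw [pow_mul]; positivity

lemma continuous_pSum : Continuous (pSum α β a) := by
  unfold pSum; fun_prop

lemma pF_pow (hc : 0 < c) (ha : ∀ i, 1 ≤ a i) (y : Fin n → ℝ) :
    pF α β a c y ^ (2 * c) = pSum α β a y := by
  have h := Real.rpow_inv_natCast_pow (pSum_nonneg (α := α) (β := β) ha y)
    (n := 2 * c) (by omega)
  rw [← h]; unfold pF pSum; push_cast; rw [one_div]

lemma pF_nonneg (ha : ∀ i, 1 ≤ a i) (y : Fin n → ℝ) : 0 ≤ pF α β a c y :=
  Real.rpow_nonneg (pSum_nonneg ha y) _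

lemma kF_eq (hc : 0 < c) (ha : ∀ i, 1 ≤ a i) (y : Fin n → ℝ) :
    kF α β a c y = (1 + pSum α β a y) ^ ((1 : ℝ) / (2 * (c : ℝ))) := by
  rw [kF, pF_pow hc ha]

lemma kF_pow (hc : 0 < c) (ha : ∀ i, 1 ≤ a i) (y : Fin n → ℝ) :
    kF α β a c y ^ (2 * c) = 1 + pSum α β a y := by
  have h0 := pSum_nonneg (α := α) (β := β) ha y
  have h := Real.rpow_inv_natCast_pow (x := 1 + pSum α β a y) (by linarith)
    (n := 2 * c) (by omega)
  rw [kF_eq hc ha]; push_cast at h; rw [one_div, h]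

lemma one_le_kF (hc : 0 < c) (ha : ∀ i, 1 ≤ a i) (y : Fin n → ℝ) :
    1 ≤ kF α β a c y := by
  rw [kF_eq hc ha]
  exact Real.one_le_rpow (by linarith [pSum_nonneg (α := α) (β := β) ha y]) (by positivity)

lemma kF_mul_TqP (hc : 0 < c) (ha : ∀ i, 1 ≤ a i) (y : Fin n → ℝ) (i : Fin n) :
    kF α β a c y ^ (α i) * TqP α β a c y i = y i := by
  have := one_le_kF (α := α) (β := β) hc ha y
  unfold TqP; field_simp

lemma pSum_TqP (hc : 0 < c) (ha : ∀ i, 1 ≤ a i) (hαβ : ∀ i, 0 < α i → α i * β i = c)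
    (y : Fin n → ℝ) :
    pSum α β a (TqP α β a c y) = pSum α β a y / (1 + pSum α β a y) := by
  rw [← kF_pow hc ha]
  conv_lhs => unfold pSum
  conv_rhs => enter [1]; unfold pSum
  rw [Finset.sum_div]
  refine Finset.sum_congr rfl fun i hi => ?_
  have h := hαβ i (Finset.mem_filter.1 hi).2
  have e : α i * (2 * β i) = 2 * c := by rw [← h]; ring
  unfold TqP
  rw [div_pow, ← pow_mul, e, mul_div_assoc]

lemma pF_TqP_lt (hc : 0 < c) (ha : ∀ i, 1 ≤ a i) (hαβ : ∀ i, 0 < α i → α i * β i = c)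
    (y : Fin n → ℝ) : pF α β a c (TqP α β a c y) < 1 := by
  have h0 := pSum_nonneg (α := α) (β := β) ha y
  refine lt_of_pow_lt_pow_left₀ (2 * c) zero_le_one ?_
  rw [pF_pow hc ha, pSum_TqP hc ha hαβ, one_pow, div_lt_one (by linarith)]
  linarith

lemma kHat_TqP (hc : 0 < c) (ha : ∀ i, 1 ≤ a i) (hαβ : ∀ i, 0 < α i → α i * β i = c)
    (y : Fin n → ℝ) : kHat α β a c (TqP α β a c y) = kF α β a c y := by
  have h0 := pSum_nonneg (α := α) (β := β) ha y
  have h1 : 1 - pSum α β a (TqP α β a c y) = (1 + pSum α β a y)⁻¹ := by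
    rw [pSum_TqP hc ha hαβ]; field_simp; ring
  have : kHat α β a c (TqP α β a c y)
      = (1 - pSum α β a (TqP α β a c y)) ^ (-(1 : ℝ) / (2 * (c : ℝ))) := rfl
  rw [this, h1, kF_eq hc ha, Real.inv_rpow (by linarith), neg_div, Real.rpow_neg (by linarith),
    inv_inv]

lemma fTil_TqP (hc : 0 < c) (ha : ∀ i, 1 ≤ a i) (hαβ : ∀ i, 0 < α i → α i * β i = c)
    (k : ℕ) (f : (Fin n → ℝ) → Fin n → ℝ) (y : Fin n → ℝ) (j : Fin n) :
    fTil α β a c k f (TqP α β a c y) j = f y j / kF α β a c y ^ (k + α j) := by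
  unfold fTil
  rw [kHat_TqP hc ha hαβ]
  simp only [kF_mul_TqP hc ha]
  rw [zpow_neg, div_eq_inv_mul, ← Nat.cast_add, zpow_natCast]

/-- The rate `κ^k S / c` governing the logarithm of `κ` along solutions, in the original
coordinates. -/
lemma kF_pow_mul_SF (hc : 0 < c) (ha : ∀ i, 1 ≤ a i) (hαβ : ∀ i, 0 < α i → α i * β i = c)
    (k : ℕ) (f : (Fin n → ℝ) → Fin n → ℝ) (y : Fin n → ℝ) :
    kF α β a c y ^ k * SF α β a c k f (TqP α β a c y) =
      (∑ j ∈ univ.filter (fun i => 0 < α i), (β j : ℝ) * a j * y j ^ (2 * β j - 1) * f y j)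
        / (1 + pSum α β a y) := by
  have hk := one_le_kF (α := α) (β := β) hc ha y
  rw [← kF_pow hc ha, SF, Finset.mul_sum, Finset.sum_div]
  refine Finset.sum_congr rfl fun j hj => ?_
  have h := hαβ j (Finset.mem_filter.1 hj).2
  have hβ : 0 < β j := Nat.pos_of_ne_zero fun h0 => by rw [h0] at h; omega
  have e : α j * (2 * β j - 1) + α j = 2 * c := by
    rw [← h, ← Nat.mul_succ, show (2 * β j - 1).succ = 2 * β j by omega]; ring
  rw [fTil_TqP hc ha hαβ]
  unfold TqP
  rw [div_pow, ← pow_mul, ← e, pow_add, pow_add]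
  field_simp

/-- Along a solution, `(log κ)' = κ^k S(x) / c` for `x = T(y)`. -/
lemma hasDerivAt_log_kF (hc : 0 < c) (ha : ∀ i, 1 ≤ a i)
    (hαβ : ∀ i, 0 < α i → α i * β i = c) (k : ℕ) (f : (Fin n → ℝ) → Fin n → ℝ)
    {y : ℝ → Fin n → ℝ} {t : ℝ} (hy : HasDerivAt y (f (y t)) t) :
    HasDerivAt (fun s => Real.log (kF α β a c (y s)))
      (kF α β a c (y t) ^ k * SF α β a c k f (TqP α β a c (y t)) / c) t := by
  have h0 := fun s => pSum_nonneg (α := α) (β := β) ha (y s)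
  have hlog : (fun s => Real.log (kF α β a c (y s)))
      = fun s => (1 / (2 * (c : ℝ))) * Real.log (1 + pSum α β a (y s)) := by
    funext s
    rw [kF_eq hc ha, Real.log_rpow (by linarith [h0 s])]
  have hS : HasDerivAt (fun s => pSum α β a (y s))
      (∑ j ∈ univ.filter (fun i => 0 < α i),
        a j * (((2 * β j : ℕ) : ℝ) * y t j ^ (2 * β j - 1) * f (y t) j)) t := by
    unfold pSum
    refine HasDerivAt.fun_sum fun j _ => ?_
    exact ((hasDerivAt_pi.1 hy j).pow (2 * β j)).const_mul (a j)
  rw [hlog, kF_pow_mul_SF hc ha hαβ]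
  refine (((hS.const_add 1).log (by linarith [h0 t])).const_mul
    (1 / (2 * (c : ℝ)))).congr_deriv (Eq.symm ?_)
  have : (∑ j ∈ univ.filter (fun i => 0 < α i),
        a j * (((2 * β j : ℕ) : ℝ) * y t j ^ (2 * β j - 1) * f (y t) j))
      = 2 * ∑ j ∈ univ.filter (fun i => 0 < α i),
        (β j : ℝ) * a j * y t j ^ (2 * β j - 1) * f (y t) j := by
    rw [Finset.mul_sum]
    refine Finset.sum_congr rfl fun j _ => ?_
    push_cast; ring
  rw [this]
  have := h0 t
  field_simp

/-- In the compactified coordinates `x = T(y)` the equation becomes `x' = κ^k g(x)`. -/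
lemma hasDerivAt_TqP (hc : 0 < c) (ha : ∀ i, 1 ≤ a i)
    (hαβ : ∀ i, 0 < α i → α i * β i = c) (k : ℕ) (f : (Fin n → ℝ) → Fin n → ℝ)
    {y : ℝ → Fin n → ℝ} {t : ℝ} (hy : HasDerivAt y (f (y t)) t) (i : Fin n) :
    HasDerivAt (fun s => TqP α β a c (y s) i)
      (kF α β a c (y t) ^ k * gDesing α β a c k f (TqP α β a c (y t)) i) t := by
  have hκ := fun s => one_le_kF (α := α) (β := β) hc ha (y s)
  -- Writing `κ^{-αᵢ} = exp (-αᵢ log κ)` reduces everything to the derivative of `log κ`.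
  have hx : (fun s => TqP α β a c (y s) i)
      = fun s => y s i * Real.exp (-(α i : ℝ) * Real.log (kF α β a c (y s))) := by
    funext s
    unfold TqP
    rw [neg_mul, Real.exp_neg, ← Real.log_pow, Real.exp_log (by have := hκ s; positivity)]
    rfl
  have hL := hasDerivAt_log_kF hc ha hαβ k f hy
  have hd := (hasDerivAt_pi.1 hy i).mul ((hL.const_mul (-(α i : ℝ))).exp)
  rw [hx]
  refine hd.congr_deriv (Eq.symm ?_)
  have hE : Real.exp (-(α i : ℝ) * Real.log (kF α β a c (y t)))
      = (kF α β a c (y t) ^ α i)⁻¹ := by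
    rw [neg_mul, Real.exp_neg, ← Real.log_pow, Real.exp_log (by have := hκ t; positivity)]
  rw [hE]
  unfold gDesing
  rw [fTil_TqP hc ha hαβ]
  generalize SF α β a c k f (TqP α β a c (y t)) = S
  unfold TqP
  have := hκ t
  rw [pow_add]
  field_simp
  ring

end compactification

/-! ### Boundedness of the rescaled field near infinity -/

/-- Every `x` whose `I`-part has Euclidean norm in `[B⁻¹, B]` is the quasi-homogeneous dilation,
by a factor in `[B⁻¹, B]`, of a point whose `I`-part lies on the unit sphere. -/
lemma exists_scaling {n : ℕ} (α : Fin n → ℕ) (B : ℝ) (hB : 1 ≤ B) (x : Fin n → ℝ)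
    (hlo : (B⁻¹) ^ 2 ≤ ∑ i ∈ univ.filter (fun i => 0 < α i), x i ^ 2)
    (hhi : ∑ i ∈ univ.filter (fun i => 0 < α i), x i ^ 2 ≤ B ^ 2) :
    ∃ r, B⁻¹ ≤ r ∧ r ≤ B ∧
      ∑ i ∈ univ.filter (fun i => 0 < α i), (x i / r ^ α i) ^ 2 = 1 := by
  have hB0 : 0 < B := by linarith
  have hi1 : B⁻¹ ≤ 1 := inv_le_one_of_one_le₀ hB
  have hcont : ContinuousOn
      (fun r : ℝ => ∑ i ∈ univ.filter (fun i => 0 < α i), (x i / r ^ α i) ^ 2)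
      (Set.Icc B⁻¹ B) := by
    refine continuousOn_finsetSum _ fun i _ => ?_
    refine ContinuousOn.pow (ContinuousOn.div continuousOn_const (by fun_prop) ?_) 2
    intro r hr
    have : 0 < r := lt_of_lt_of_le (inv_pos.2 hB0) hr.1
    positivity
  have h1 : ∑ i ∈ univ.filter (fun i => 0 < α i), (x i / B ^ α i) ^ 2 ≤ 1 := by
    calc _ ≤ ∑ i ∈ univ.filter (fun i => 0 < α i), x i ^ 2 / B ^ 2 := by
          refine Finset.sum_le_sum fun i hi => ?_
          have hi' := (Finset.mem_filter.1 hi).2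
          rw [div_pow]
          have : B ≤ B ^ α i := le_self_pow₀ hB hi'.ne'
          gcongr
      _ ≤ 1 := by rw [← Finset.sum_div, div_le_one (by positivity)]; exact hhi
  have h2 : 1 ≤ ∑ i ∈ univ.filter (fun i => 0 < α i), (x i / B⁻¹ ^ α i) ^ 2 := by
    calc 1 ≤ ∑ i ∈ univ.filter (fun i => 0 < α i), x i ^ 2 / (B⁻¹) ^ 2 := by
          rw [← Finset.sum_div, one_le_div (by positivity)]; exact hlo
      _ ≤ _ := by
          refine Finset.sum_le_sum fun i hi => ?_
          have hi' := (Finset.mem_filter.1 hi).2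
          rw [div_pow]
          have : B⁻¹ ^ α i ≤ B⁻¹ := pow_le_of_le_one (by positivity) hi1 hi'.ne'
          gcongr
  obtain ⟨r, hr, h⟩ := intermediate_value_Icc' (by linarith) hcont ⟨h1, h2⟩
  exact ⟨r, hr.1, hr.2, h⟩

/-- The asymptotic condition bounds `R^{-(k+αⱼ)} fⱼ(R^α z)` for `z` in a compact part of the unit
cylinder and `R` large. The quasi-homogeneous part need not be assumed continuous: it is bounded
there because it is within `1` of a fixed continuous rescaling of `f`. -/
lemma bounded_on_sphere {n : ℕ} {α : Fin n → ℕ} {k : ℕ} {f fak : (Fin n → ℝ) → Fin n → ℝ}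
    (hf : Continuous f) (haqh : IsAQH α k f fak) (B : ℝ) :
    ∃ C R₀ : ℝ, 1 ≤ R₀ ∧ ∀ R, R₀ ≤ R → ∀ z : Fin n → ℝ, (∀ j, |z j| ≤ B) →
      (∑ i ∈ univ.filter (fun i => 0 < α i), z i ^ 2) = 1 →
      ∀ j, |f (fun i => R ^ α i * z i) j / R ^ (k + α j)| ≤ C := by
  have hK : IsCompact (Set.Icc (fun _ : Fin n => -B) (fun _ => B)) := isCompact_Icc
  obtain ⟨R₀, hR₀⟩ := haqh.2 _ hK 1 one_pos
  set R₁ := max R₀ 1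
  have key : ∀ R, R₁ ≤ R → ∀ z : Fin n → ℝ, (∀ j, |z j| ≤ B) →
      (∑ i ∈ univ.filter (fun i => 0 < α i), z i ^ 2) = 1 →
      ∀ j, |f (fun i => R ^ α i * z i) j / R ^ (k + α j) - fak z j| < 1 := by
    intro R hR z hz hz1 j
    have hRpos : 0 < R := lt_of_lt_of_le one_pos ((le_max_right _ _).trans hR)
    have := hR₀ R ((le_max_left _ _).trans hR) z
      ⟨fun j => (abs_le.1 (hz j)).1, fun j => (abs_le.1 (hz j)).2⟩ hz1 j
    rw [zpow_neg, ← Nat.cast_add, zpow_natCast] at this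
    convert this using 2
    field_simp
  obtain ⟨M, hM⟩ := hK.exists_bound_of_continuousOn
    (f := fun z : Fin n → ℝ => fun j => f (fun i => R₁ ^ α i * z i) j / R₁ ^ (k + α j))
    (by fun_prop)
  refine ⟨M + 2, R₁, le_max_right _ _, fun R hR z hz hz1 j => ?_⟩
  have h1 := abs_lt.1 (key R hR z hz hz1 j)
  have h2 := abs_lt.1 (key R₁ le_rfl z hz hz1 j)
  have h3 := abs_le.1 ((norm_le_pi_norm _ j).trans (hM z
    ⟨fun j => (abs_le.1 (hz j)).1, fun j => (abs_le.1 (hz j)).2⟩))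
  rw [abs_le]
  constructor <;> linarith [h1.1, h1.2, h2.1, h2.2, h3.1, h3.2]

/-- Boundedness of `f̃` near infinity: `κ^{-(k+αⱼ)} fⱼ(κ^α x)` stays bounded as `κ → ∞`, for `x`
bounded and with `I`-part bounded away from `0`. -/
lemma bounded_rescaled {n : ℕ} {α : Fin n → ℕ} {k : ℕ} {f fak : (Fin n → ℝ) → Fin n → ℝ}
    (hf : Continuous f) (haqh : IsAQH α k f fak) (B : ℝ) (hB : 1 ≤ B) :
    ∃ C κ₀ : ℝ, 0 < C ∧ ∀ κ, κ₀ ≤ κ → ∀ x : Fin n → ℝ, (∀ j, |x j| ≤ B) →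
      (B⁻¹) ^ 2 ≤ ∑ i ∈ univ.filter (fun i => 0 < α i), x i ^ 2 →
      ∑ i ∈ univ.filter (fun i => 0 < α i), x i ^ 2 ≤ B ^ 2 →
      ∀ j, |f (fun i => κ ^ α i * x i) j / κ ^ (k + α j)| ≤ C := by
  obtain ⟨C, R₀, hR₀, h⟩ := bounded_on_sphere hf haqh B
  have hB0 : 0 < B := by linarith
  set N := k + ∑ i, α i
  refine ⟨B ^ N * max C 1, R₀ * B, by positivity, fun κ hκ x hx hlo hhi j => ?_⟩
  obtain ⟨r, hr1, hr2, hr⟩ := exists_scaling α B hB x hlo hhi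
  have hr0 : 0 < r := lt_of_lt_of_le (inv_pos.2 hB0) hr1
  have hκ0 : 0 < κ := lt_of_lt_of_le (by positivity) hκ
  have hR : R₀ ≤ κ * r := by
    calc R₀ = R₀ * B * B⁻¹ := by field_simp
      _ ≤ κ * r := by gcongr
  have hz : ∀ j, |x j / r ^ α j| ≤ B := by
    intro j
    rcases Nat.eq_zero_or_pos (α j) with h0 | h0
    · simpa [h0] using hx j
    · refine le_trans ?_ hB
      rw [← sq_le_one_iff_abs_le_one, ← hr]
      exact Finset.single_le_sum (f := fun i => (x i / r ^ α i) ^ 2)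
        (fun i _ => sq_nonneg _) (by simp [h0])
  have := h (κ * r) hR (fun i => x i / r ^ α i) hz hr j
  have e : (fun i => (κ * r) ^ α i * (x i / r ^ α i)) = fun i => κ ^ α i * x i := by
    funext i; rw [mul_pow]; field_simp
  rw [e] at this
  have e2 : f (fun i => κ ^ α i * x i) j / κ ^ (k + α j)
      = r ^ (k + α j) * (f (fun i => κ ^ α i * x i) j / (κ * r) ^ (k + α j)) := by
    rw [mul_pow]; field_simp
  rw [e2, abs_mul, abs_of_pos (by positivity)]
  have hrB : r ^ (k + α j) ≤ B ^ N := by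
    calc r ^ (k + α j) ≤ B ^ (k + α j) := by gcongr
      _ ≤ B ^ N := pow_le_pow_right₀ hB (by
        have := Finset.single_le_sum (f := α) (fun i _ => Nat.zero_le _) (mem_univ j)
        simp only [N]; omega)
  exact mul_le_mul hrB (this.trans (le_max_left _ _)) (abs_nonneg _) (by positivity)

/-! ### The limit direction is an equilibrium -/

/-- Eventual properties as `t → b⁻`, for `b` real or `+∞`, hold on some interval `[s, b)`. -/
lemma eventually_left {t₀ : ℝ} {b : EReal} (hb : (t₀ : EReal) < b) {Q : ℝ → Prop}
    (h : ∀ᶠ t in comap (fun t : ℝ => (t : EReal)) (nhdsWithin b (Set.Iio b)), Q t) :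
    ∃ s : ℝ, t₀ < s ∧ (s : EReal) < b ∧ ∀ t : ℝ, s ≤ t → (t : EReal) < b → Q t := by
  obtain ⟨V, hV, hVQ⟩ := h
  obtain ⟨u, hu, huV⟩ := (mem_nhdsLT_iff_exists_Ioo_subset' hb).1 hV
  obtain ⟨s, hs1, hs2⟩ := EReal.lt_iff_exists_real_btwn.1 (max_lt hb hu)
  refine ⟨s, EReal.coe_lt_coe_iff.1 ((le_max_left _ _).trans_lt hs1), hs2, fun t ht htb => ?_⟩
  exact hVQ (huV ⟨((le_max_right _ _).trans_lt hs1).trans_le (EReal.coe_le_coe_iff.2 ht), htb⟩)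

/-- If a solution `y` of `y' = f(y)` on `(t₀, b)` tends to infinity in the
direction `x*` as `t → b⁻` (i.e. `p(y(t)) → ∞` and `T(y(t)) → x*`), then `x*`
is an equilibrium of the (locally Lipschitz extension `G` to `D̄` of the)
desingularized vector field: `G(x*) = 0`. -/
theorem divergence_direction_is_equilibrium_at_infinity
    {n : ℕ} (hn : 1 ≤ n) (α β : Fin n → ℕ) (a : Fin n → ℝ) (c : ℕ)
    (hα : ∃ i, 0 < α i) (hc : 0 < c)
    (hαβ : ∀ i, 0 < α i → α i * β i = c)
    (hβ0 : ∀ i, α i = 0 → β i = 0)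
    (ha : ∀ i, 1 ≤ a i)
    (k : ℕ) (hk : 1 ≤ k)
    (f fak : (Fin n → ℝ) → Fin n → ℝ)
    (hf : Continuous f) (haqh : IsAQH α k f fak)
    (G : (Fin n → ℝ) → Fin n → ℝ)
    (hGlip : LocallyLipschitzOn {x : Fin n → ℝ | pF α β a c x ≤ 1} G)
    (hGext : ∀ x : Fin n → ℝ, pF α β a c x < 1 → G x = gDesing α β a c (k : ℤ) f x)
    (t₀ : ℝ) (b : EReal) (hb : (t₀ : EReal) < b)
    (y : ℝ → Fin n → ℝ)
    (hy : ∀ t : ℝ, t₀ < t → (t : EReal) < b → HasDerivAt y (f (y t)) t)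
    (hdiv : Tendsto (fun t : ℝ => pF α β a c (y t))
      (comap (fun t : ℝ => (t : EReal)) (nhdsWithin b (Set.Iio b))) atTop)
    (xs : Fin n → ℝ)
    (hdir : Tendsto (fun t : ℝ => TqP α β a c (y t))
      (comap (fun t : ℝ => (t : EReal)) (nhdsWithin b (Set.Iio b))) (nhds xs)) :
    G xs = 0 := by
  set l := comap (fun t : ℝ => (t : EReal)) (nhdsWithin b (Set.Iio b)) with hl
  have hne : NeBot l := by
    refine ⟨fun h => ?_⟩
    have h0 : ∀ᶠ t in l, False := by rw [h]; exact Filter.mem_bot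
    obtain ⟨s, -, hs, hF⟩ := eventually_left hb h0
    exact hF s le_rfl hs
  have h0 := fun v => pSum_nonneg (α := α) (β := β) ha v
  have hκ1 := fun v => one_le_kF (α := α) (β := β) hc ha v
  -- `κ → ∞` along the solution.
  have hpκ : ∀ v, pF α β a c v ≤ kF α β a c v := fun v => by
    refine le_of_pow_le_pow_left₀ (n := 2 * c) (by omega) (by linarith [hκ1 v]) ?_
    rw [pF_pow hc ha, kF_pow hc ha]; linarith
  have hκ : Tendsto (fun t => kF α β a c (y t)) l atTop :=
    tendsto_atTop_mono (fun t => hpκ (y t)) hdiv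
  -- The direction `x*` lies on the horizon.
  have hPS : Tendsto (fun t => pSum α β a (y t)) l atTop := by
    have := (tendsto_pow_atTop (α := ℝ) (n := 2 * c) (by omega)).comp hdiv
    simpa only [Function.comp_def, pF_pow hc ha] using this
  have hPx : Tendsto (fun t => pSum α β a (TqP α β a c (y t))) l (nhds 1) := by
    have h1 : Tendsto (fun t => 1 - (1 + pSum α β a (y t))⁻¹) l (nhds (1 - 0)) :=
      tendsto_const_nhds.sub
        (tendsto_inv_atTop_zero.comp (tendsto_atTop_add_const_left _ 1 hPS))
    rw [sub_zero] at h1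
    refine h1.congr fun t => ?_
    rw [pSum_TqP hc ha hαβ]
    have := h0 (y t)
    field_simp; ring
  have hPxs : pSum α β a xs = 1 :=
    tendsto_nhds_unique ((continuous_pSum.tendsto xs).comp hdir) hPx
  have hxs : pF α β a c xs ≤ 1 := by
    refine le_of_pow_le_pow_left₀ (n := 2 * c) (by omega) zero_le_one ?_
    rw [pF_pow hc ha, hPxs, one_pow]
  -- Along the trajectory `G` tends to its value at `x*`.
  have hGt : Tendsto (fun t => G (TqP α β a c (y t))) l (nhds (G xs)) := by
    have hcw := hGlip.continuousOn xs hxs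
    refine hcw.tendsto.comp (tendsto_nhdsWithin_iff.2 ⟨hdir, Eventually.of_forall fun t => ?_⟩)
    exact (pF_TqP_lt hc ha hαβ (y t)).le
  -- The `I`-part of `x*` does not vanish.
  set Q : (Fin n → ℝ) → ℝ := fun x => ∑ i ∈ univ.filter (fun i => 0 < α i), x i ^ 2 with hQ
  have hQc : Continuous Q := by simp only [hQ]; fun_prop
  have hQpos : 0 < Q xs := by
    by_contra hcon
    have hQ0 : Q xs = 0 := le_antisymm (not_lt.1 hcon) (Finset.sum_nonneg fun i _ => sq_nonneg _)
    have hz := (Finset.sum_eq_zero_iff_of_nonneg (fun i _ => sq_nonneg (xs i))).1 hQ0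
    have : pSum α β a xs = 0 := by
      refine Finset.sum_eq_zero fun i hi => ?_
      have hβ : β i ≠ 0 := fun h => by
        have := hαβ i (Finset.mem_filter.1 hi).2
        rw [h] at this; omega
      rw [pow_eq_zero_iff (two_ne_zero) |>.1 (hz i hi), zero_pow (by omega), mul_zero]
    linarith
  obtain ⟨B, hB1, hBx, hBlo, hBhi⟩ : ∃ B : ℝ, 1 ≤ B ∧ (‖xs‖ < B) ∧
      (B⁻¹) ^ 2 < Q xs ∧ Q xs < B ^ 2 := by
    have e1 : ∀ᶠ B : ℝ in atTop, (B⁻¹) ^ 2 < Q xs := by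
      have : Tendsto (fun B : ℝ => (B⁻¹) ^ 2) atTop (nhds (0 ^ 2)) :=
        tendsto_inv_atTop_zero.pow 2
      exact this.eventually_lt_const (by simpa using hQpos)
    have e2 := (tendsto_pow_atTop (α := ℝ) (n := 2) (by omega)).eventually_gt_atTop (Q xs)
    exact ((eventually_ge_atTop 1).and ((eventually_gt_atTop _).and (e1.and e2))).exists
  obtain ⟨C, κ₀, hC, hbd⟩ := bounded_rescaled hf haqh B hB1
  have hQt := (hQc.tendsto xs).comp hdir
  have hnt := hdir.norm
  -- Hence `f̃`, and therefore `S`, is bounded along the trajectory near its end.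
  set A : ℝ := ∑ j ∈ univ.filter (fun i => 0 < α i),
    (β j : ℝ) * a j * B ^ (2 * β j - 1) * C with hA
  have hB0 : 0 < B := by linarith
  have hA0 : 0 ≤ A := Finset.sum_nonneg fun j _ => by
    have := ha j
    positivity
  have hS : ∀ᶠ t in l, SF α β a c k f (TqP α β a c (y t)) ≤ A := by
    filter_upwards [hκ.eventually_ge_atTop κ₀, hnt.eventually_lt_const hBx,
      hQt.eventually_const_lt hBlo, hQt.eventually_lt_const hBhi] with t h1 h2 h3 h4
    have hxB : ∀ j, |TqP α β a c (y t) j| ≤ B := fun j =>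
      (norm_le_pi_norm (TqP α β a c (y t)) j).trans h2.le
    have hft := hbd _ h1 _ hxB h3.le h4.le
    simp only [kF_mul_TqP hc ha] at hft
    refine Finset.sum_le_sum fun j _ => ?_
    rw [fTil_TqP hc ha hαβ]
    have ha0 : 0 ≤ a j := by linarith [ha j]
    refine (le_abs_self _).trans ?_
    rw [abs_mul, abs_mul, abs_mul, abs_pow, Nat.abs_cast, abs_of_nonneg ha0]
    have := hxB j
    have := hft j
    gcongr
  by_contra hG
  obtain ⟨i, hi⟩ : ∃ i, G xs i ≠ 0 := by
    by_contra hcon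
    push Not at hcon
    exact hG (funext hcon)
  set σ := G xs i with hσ
  have hσ2 : 0 < σ ^ 2 := by positivity
  have hGi : ∀ᶠ t in l, σ ^ 2 / 2 < σ * G (TqP α β a c (y t)) i := by
    have h1 : Tendsto (fun t => σ * G (TqP α β a c (y t)) i) l (nhds (σ * σ)) :=
      (((continuous_apply i).tendsto _).comp hGt).const_mul σ
    exact h1.eventually_const_lt (by nlinarith)
  obtain ⟨s, hs0, hsb, hs⟩ := eventually_left hb (hS.and hGi)
  -- `σ xᵢ - η log κ` is nondecreasing near the end of the trajectory once `η A / c ≤ σ² / 2`.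
  obtain ⟨η, hη, hηA⟩ : ∃ η : ℝ, 0 < η ∧ η * (A / c) ≤ σ ^ 2 / 2 := by
    refine ⟨σ ^ 2 / 2 / (A / c + 1), by positivity, ?_⟩
    rw [div_mul_eq_mul_div, div_le_iff₀ (by positivity)]
    nlinarith [hσ2]
  set F : ℝ → ℝ := fun t =>
    σ * TqP α β a c (y t) i - η * Real.log (kF α β a c (y t)) with hF
  have hFd : ∀ t, s ≤ t → (t : EReal) < b → HasDerivAt F
      (kF α β a c (y t) ^ k * (σ * G (TqP α β a c (y t)) i
        - η * (SF α β a c k f (TqP α β a c (y t)) / c))) t := by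
    intro t ht htb
    have hyt := hy t (hs0.trans_le ht) htb
    have h1 := ((hasDerivAt_TqP hc ha hαβ k f hyt i).const_mul σ).sub
      ((hasDerivAt_log_kF hc ha hαβ k f hyt).const_mul η)
    refine h1.congr_deriv (Eq.symm ?_)
    rw [hGext _ (pF_TqP_lt hc ha hαβ (y t))]
    ring
  have hmono : ∀ t, s ≤ t → (t : EReal) < b → F s ≤ F t := by
    intro t ht htb
    have hlt : ∀ u ∈ Set.Icc s t, ((u : ℝ) : EReal) < b := fun u hu =>
      (EReal.coe_le_coe_iff.2 hu.2).trans_lt htb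
    refine monotoneOn_of_hasDerivWithinAt_nonneg (D := Set.Icc s t) (convex_Icc s t)
      (fun u hu => (hFd u hu.1 (hlt u hu)).continuousAt.continuousWithinAt)
      (fun u hu => (hFd u (interior_subset hu).1 (hlt u (interior_subset hu))).hasDerivWithinAt)
      (fun u hu => ?_) ⟨le_rfl, ht⟩ ⟨ht, le_rfl⟩ ht
    have hu' := interior_subset hu
    obtain ⟨hS', hG'⟩ := hs u hu'.1 (hlt u hu')
    have := hκ1 (y u)
    have h3 : η * (SF α β a c k f (TqP α β a c (y u)) / c) ≤ η * (A / c) := by gcongr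
    exact mul_nonneg (by positivity) (by linarith)
  -- But `σ xᵢ` converges while `log κ → ∞`.
  have hFbot : Tendsto F l atBot := by
    have h1 : Tendsto (fun t => σ * TqP α β a c (y t) i) l (nhds (σ * xs i)) :=
      (((continuous_apply i).tendsto _).comp hdir).const_mul σ
    have h2 : Tendsto (fun t => η * Real.log (kF α β a c (y t))) l atTop :=
      (Real.tendsto_log_atTop.comp hκ).const_mul_atTop hη
    simpa only [hF, sub_eq_add_neg, Function.comp_def] using h1.add_atBot (tendsto_neg_atTop_atBot.comp h2)
  have hsl : ∀ᶠ t in l, s ≤ t ∧ ((t : ℝ) : EReal) < b := by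
    have h1 : ∀ᶠ u in nhdsWithin b (Set.Iio b), (s : EReal) < u ∧ u < b :=
      Ioo_mem_nhdsLT hsb
    exact (h1.comap _).mono fun t ht => ⟨(EReal.coe_lt_coe_iff.1 ht.1).le, ht.2⟩
  obtain ⟨t, ht1, ht2⟩ := ((hFbot.eventually_lt_atBot (F s)).and hsl).exists
  exact absurd (hmono t ht2.1 ht2.2) (not_le.2 ht1)
end
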